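/- arXiv:2408.06616 — 5 statements merged into one kernel-verified Lean document; each statement's English description precedes it below -/
import Mathlib

section
/- Conversely, if the quantum product is associative, i.e. (T_i * T_j) * T_k = T_i * (T_j * T_k) for all indices i, j, k in ι, then Φ satisfies the WDVV equation: for all i, j, k, l, ∑_{e,f} Φ i j e · g' e f · Φ f k l = ∑_{e,f} Φ i k e · g' e f · Φ f j l. -/
open Finset

/-!
Lowering the output index of the product with `g` turns the structure constants back into `Φ`, so
the lowered `l`-component of `(T j * T i) * T k` is `∑ e f, Φ j i e * g' e f * Φ f k l`, and that
of `T j * (T i * T k)` is, by the symmetry of `Φ`, `∑ e f, Φ i k e * g' e f * Φ f j l`.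
Associativity equates the two, and `Φ j i e = Φ i j e` gives WDVV.
-/

/-- **Associativity of the quantum product implies the WDVV equation.**
With the same setup as before (symmetric `g` with two-sided inverse `g'`, totally
symmetric `Φ`, quantum product `qmul` extended bilinearly from
`T i * T j = ∑ e f, Φ i j e * g' e f • T f` on the standard basis
`T i = Pi.single i 1`), if `qmul` is associative on basis vectors then `Φ`
satisfies the WDVV equation. -/
theorem associativity_implies_wdvv
    {K : Type*} [CommRing K] {ι : Type*} [Fintype ι] [DecidableEq ι]
    (g g' : ι → ι → K)
    (hg : ∀ i j, g i j = g j i)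
    (hgg' : ∀ i f, (∑ e, g i e * g' e f) = if i = f then (1 : K) else 0)
    (hg'g : ∀ i f, (∑ e, g' i e * g e f) = if i = f then (1 : K) else 0)
    (Φ : ι → ι → ι → K)
    (hΦ₁ : ∀ i j k, Φ i j k = Φ j i k)
    (hΦ₂ : ∀ i j k, Φ i j k = Φ i k j)
    (T : ι → (ι → K)) (hT : ∀ i, T i = Pi.single i 1)
    (qmul : (ι → K) → (ι → K) → (ι → K))
    (hqmul : ∀ x y p, qmul x y p = ∑ i, ∑ j, ∑ e, x i * y j * (Φ i j e * g' e p))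
    (assoc : ∀ i j k, qmul (qmul (T i) (T j)) (T k) = qmul (T i) (qmul (T j) (T k))) :
    ∀ i j k l,
      (∑ e, ∑ f, Φ i j e * g' e f * Φ f k l) = ∑ e, ∑ f, Φ i k e * g' e f * Φ f j l := by
  -- Contracting with `g` cancels `g'`, which lowers the output index of the product.
  have lower : ∀ x y l, ∑ p, qmul x y p * g p l = ∑ i, ∑ j, x i * y j * Φ i j l := by
    intro x y l
    calc ∑ p, qmul x y p * g p l
        = ∑ p, ∑ i, ∑ j, ∑ e, x i * y j * Φ i j e * (g' e p * g p l) := by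
          simp only [hqmul, sum_mul]
          refine sum_congr rfl fun p _ => sum_congr rfl fun i _ => sum_congr rfl fun j _ =>
            sum_congr rfl fun e _ => by ring
      _ = ∑ i, ∑ j, ∑ e, x i * y j * Φ i j e * ∑ p, g' e p * g p l := by
          rw [sum_comm]
          refine sum_congr rfl fun i _ => ?_
          rw [sum_comm]
          refine sum_congr rfl fun j _ => ?_
          rw [sum_comm]
          simp only [mul_sum]
      _ = ∑ i, ∑ j, x i * y j * Φ i j l := by
          simp [hg'g]
  have basis_mul : ∀ i j p, qmul (T i) (T j) p = ∑ e, Φ i j e * g' e p := by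
    intro i j p
    simp [hqmul, hT, Pi.single_apply]
  have left : ∀ i j k l, ∑ p, qmul (qmul (T i) (T j)) (T k) p * g p l
      = ∑ e, ∑ f, Φ i j e * g' e f * Φ f k l := by
    intro i j k l
    rw [lower, sum_comm (γ := ι) (f := fun e f => Φ i j e * g' e f * Φ f k l)]
    simp only [basis_mul]
    simp [hT, Pi.single_apply, sum_mul]
  have right : ∀ i j k l, ∑ p, qmul (T i) (qmul (T j) (T k)) p * g p l
      = ∑ e, ∑ f, Φ j k e * g' e f * Φ f i l := by
    intro i j k l
    rw [lower, sum_comm (γ := ι) (f := fun e f => Φ j k e * g' e f * Φ f i l)]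
    simp only [basis_mul]
    simp [hT, Pi.single_apply, sum_mul, hΦ₁ i]
  intro i j k l
  -- Associativity of `T j * T i * T k` is WDVV up to the symmetry `Φ i j e = Φ j i e`.
  have h := left j i k l
  rw [assoc, right] at h
  simp only [hΦ₁ i j]
  exact h.symm
end

section
/- Suppose Φ satisfies the WDVV equation and there is a distinguished index 0 in ι with Φ 0 i j = g i j for all i, j. Then the free K-module K^ι equipped with the quantum product * is a commutative, associative K-algebra with multiplicative identity T_0. -/
/-!
Write `C i j p = ∑ e, Φ i j e * g' e p` for the structure constants of the quantum product.
Commutativity is the symmetry of `Φ` in its first two arguments. The identity law holds because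
`C i₀ j p = ∑ e, g j e * g' e p` is the Kronecker delta. For associativity, contracting the WDVV
equation for `(j, i, k, l)` with `g' l p` gives `∑ f, C i j f * C f k p = ∑ f, C j k f * C i f p`,
which by `structureConst_assoc` is associativity of the product on arbitrary vectors.
-/

open Finset

/-- Associativity of structure constants on basis vectors extends bilinearly to all vectors. -/
lemma structureConst_assoc {K ι : Type*} [CommRing K] [Fintype ι] (C : ι → ι → ι → K)
    (hC : ∀ i j k p, ∑ f, C i j f * C f k p = ∑ f, C j k f * C i f p) (x y z : ι → K) (p : ι) :
    ∑ f, ∑ k, (∑ i, ∑ j, x i * y j * C i j f) * z k * C f k p =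
      ∑ i, ∑ f, x i * (∑ j, ∑ k, y j * z k * C j k f) * C i f p := by
  have hl : ∑ f, ∑ k, (∑ i, ∑ j, x i * y j * C i j f) * z k * C f k p =
      ∑ i, ∑ j, ∑ k, x i * y j * z k * ∑ f, C i j f * C f k p := by
    simp only [sum_mul, mul_sum]
    calc _ = ∑ f, ∑ i, ∑ j, ∑ k, x i * y j * C i j f * z k * C f k p := by
          refine sum_congr rfl fun f _ => ?_
          rw [sum_comm]
          exact sum_congr rfl fun i _ => sum_comm
      _ = _ := by
          rw [sum_comm]
          refine sum_congr rfl fun i _ => ?_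
          rw [sum_comm]
          refine sum_congr rfl fun j _ => ?_
          rw [sum_comm]
          refine sum_congr rfl fun k _ => sum_congr rfl fun f _ => ?_
          ring
  have hr : ∑ i, ∑ f, x i * (∑ j, ∑ k, y j * z k * C j k f) * C i f p =
      ∑ i, ∑ j, ∑ k, x i * y j * z k * ∑ f, C j k f * C i f p := by
    simp only [sum_mul, mul_sum]
    refine sum_congr rfl fun i _ => ?_
    rw [sum_comm]
    refine sum_congr rfl fun j _ => ?_
    rw [sum_comm]
    refine sum_congr rfl fun k _ => sum_congr rfl fun f _ => ?_
    ring
  rw [hl, hr]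
  simp only [hC]

/-- **The quantum cohomology algebra.**
With `g` symmetric with two-sided inverse `g'`, `Φ` totally symmetric satisfying
the WDVV equation, and `qmul` the bilinear quantum product determined by
`T i * T j = ∑ e f, Φ i j e * g' e f • T f` on the standard basis
`T i = Pi.single i 1`: if a distinguished index `i₀` satisfies
`Φ i₀ i j = g i j` for all `i j`, then the free `K`-module `ι → K` equipped with
`qmul` is a commutative, associative `K`-algebra with multiplicative identity
`T i₀`: `qmul` is `K`-bilinear, commutative, associative and has unit `T i₀`. -/
theorem quantum_cohomology_comm_assoc_algebra
    {K : Type*} [CommRing K] {ι : Type*} [Fintype ι] [DecidableEq ι]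
    (g g' : ι → ι → K)
    (hg : ∀ i j, g i j = g j i)
    (hgg' : ∀ i f, (∑ e, g i e * g' e f) = if i = f then (1 : K) else 0)
    (hg'g : ∀ i f, (∑ e, g' i e * g e f) = if i = f then (1 : K) else 0)
    (Φ : ι → ι → ι → K)
    (hΦ₁ : ∀ i j k, Φ i j k = Φ j i k)
    (hΦ₂ : ∀ i j k, Φ i j k = Φ i k j)
    (T : ι → (ι → K)) (hT : ∀ i, T i = Pi.single i 1)
    (qmul : (ι → K) → (ι → K) → (ι → K))
    (hqmul : ∀ x y p, qmul x y p = ∑ i, ∑ j, ∑ e, x i * y j * (Φ i j e * g' e p))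
    (WDVV : ∀ i j k l,
      (∑ e, ∑ f, Φ i j e * g' e f * Φ f k l) = ∑ e, ∑ f, Φ i k e * g' e f * Φ f j l)
    (i₀ : ι) (hΦ₀ : ∀ i j, Φ i₀ i j = g i j) :
    (∀ (c : K) (x y z : ι → K),
        qmul (c • x + y) z = c • qmul x z + qmul y z ∧
        qmul z (c • x + y) = c • qmul z x + qmul z y) ∧
    (∀ x y : ι → K, qmul x y = qmul y x) ∧
    (∀ x y z : ι → K, qmul (qmul x y) z = qmul x (qmul y z)) ∧
    (∀ x : ι → K, qmul (T i₀) x = x ∧ qmul x (T i₀) = x) := by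
  have hq : ∀ x y p, qmul x y p = ∑ i, ∑ j, x i * y j * ∑ e, Φ i j e * g' e p := by
    intro x y p
    simp only [hqmul, mul_sum]
  have hcomm : ∀ x y : ι → K, qmul x y = qmul y x := by
    intro x y
    funext p
    rw [hq, hq, sum_comm]
    refine sum_congr rfl fun j _ => sum_congr rfl fun i _ => ?_
    simp only [hΦ₁ i j, mul_comm (x i)]
  have hlin : ∀ (c : K) (x y z : ι → K), qmul (c • x + y) z = c • qmul x z + qmul y z := by
    intro c x y z
    funext p
    simp only [Pi.add_apply, Pi.smul_apply, smul_eq_mul, hqmul, mul_sum, ← sum_add_distrib]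
    refine sum_congr rfl fun i _ => sum_congr rfl fun j _ => sum_congr rfl fun e _ => ?_
    ring
  have hunit : ∀ x : ι → K, qmul (T i₀) x = x := by
    intro x
    funext p
    simp [hq, hT, hΦ₀, hgg', Pi.single_apply]
  -- Composing two structure constants gives one side of WDVV contracted with `g'`.
  have hcontr : ∀ (a : ι → K) (b : ι → ι → K) (p : ι),
      ∑ f, (∑ e, a e * g' e f) * (∑ l, b f l * g' l p) =
        ∑ l, (∑ e, ∑ f, a e * g' e f * b f l) * g' l p := by
    intro a b p
    calc _ = ∑ f, ∑ l, ∑ e, a e * g' e f * b f l * g' l p := by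
          simp only [sum_mul, mul_sum]
          refine sum_congr rfl fun f _ => sum_congr rfl fun l _ => sum_congr rfl fun e _ => ?_
          ring
      _ = _ := by
          rw [sum_comm]
          refine sum_congr rfl fun l _ => ?_
          rw [sum_comm]
          simp only [sum_mul]
  refine ⟨fun c x y z => ⟨hlin c x y z, ?_⟩, hcomm, ?_, fun x => ⟨hunit x, ?_⟩⟩
  · rw [hcomm z, hlin, hcomm x, hcomm y]
  · intro x y z
    funext p
    simp only [hq]
    refine structureConst_assoc (fun i j p => ∑ e, Φ i j e * g' e p) (fun i j k p => ?_) x y z p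
    rw [hcontr (Φ i j) (fun f l => Φ f k l), hcontr (Φ j k) (fun f l => Φ i f l)]
    refine sum_congr rfl fun l _ => ?_
    congr 1
    simpa only [hΦ₁ j i, hΦ₁ _ i] using WDVV j i k l
  · rw [hcomm, hunit]
end

section
/- The 12 elements T_{ij} = aⁱHʲ for 0 ≤ i ≤ 3 and 0 ≤ j ≤ 2 form a ℚ-vector-space basis of R; in particular R has dimension 12 over ℚ. -/
/-!
The ring `R` is a tower of two monogenic extensions. Let `A = ℚ[x]/(x⁴)` with root `α`, and let
`B = A[y]/(y³ - αy² + α²y - α³)` with root `β`. Both polynomials are monic, so `B` has the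
`ℚ`-basis `αⁱβʲ` (`i < 4`, `j < 3`). The assignment `a ↦ α`, `H ↦ β` kills the relations and
hence defines a `ℚ`-algebra map `R → B` carrying `T i j` to `αⁱβʲ`; this gives linear independence
(`linearIndependent_T`). For spanning (`span_T`), the relations `a⁴ = 0` and
`H³ = aH² - a²H + a³` show that the span of the `T i j` is stable under multiplication by `a`
and `H`, and it contains `1`.
-/

open MvPolynomial

noncomputable section

/-- The polynomial ring `ℚ[a, H]` in two variables. -/
abbrev P : Type := MvPolynomial (Fin 2) ℚ

/-- The variable `a` (hyperplane class of the Grassmannian). -/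
def aP : P := X 0

/-- The variable `H` (pullback of the hyperplane class of `ℙ³`). -/
def HP : P := X 1

/-- The ideal `(a⁴, H³ − aH² + a²H − a³)`. -/
def J : Ideal P := Ideal.span {aP ^ 4, HP ^ 3 - aP * HP ^ 2 + aP ^ 2 * HP - aP ^ 3}

/-- The cohomology ring `R = ℚ[a,H]/(a⁴, H³ − aH² + a²H − a³)`. -/
abbrev R : Type := P ⧸ J

/-- `T i j` is the image of `aⁱHʲ` in `R`. -/
def T (i j : ℕ) : R := Ideal.Quotient.mk J (aP ^ i * HP ^ j)

/-- The truncated polynomial ring `ℚ[x]/(x⁴)`. -/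
abbrev TruncA : Type := AdjoinRoot (Polynomial.X ^ 4 : Polynomial ℚ)

/-- The class `α` of `x` in `ℚ[x]/(x⁴)`. -/
def alphaA : TruncA := AdjoinRoot.root _

/-- The relation `y³ - αy² + α²y - α³`, as a polynomial in `y` over `ℚ[x]/(x⁴)`. -/
def cubicA : Polynomial TruncA :=
  Polynomial.X ^ 3 - Polynomial.C alphaA * Polynomial.X ^ 2
    + Polynomial.C (alphaA ^ 2) * Polynomial.X - Polynomial.C (alphaA ^ 3)

/-- The second step of the tower, `(ℚ[x]/(x⁴))[y]/(y³ - αy² + α²y - α³)`. -/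
abbrev TowerB : Type := AdjoinRoot cubicA

lemma alphaA_pow_four : alphaA ^ 4 = 0 := by
  have h := AdjoinRoot.eval₂_root (Polynomial.X ^ 4 : Polynomial ℚ)
  simpa [Polynomial.eval₂_pow, alphaA] using h

instance nontrivial_truncA : Nontrivial TruncA :=
  AdjoinRoot.nontrivial _ (by simp)

lemma cubicA_natDegree : cubicA.natDegree = 3 := by
  unfold cubicA; compute_degree!

lemma cubicA_monic : cubicA.Monic := by
  unfold cubicA; monicity!

lemma cubicA_root :
    AdjoinRoot.root cubicA ^ 3 - algebraMap TruncA TowerB alphaA * AdjoinRoot.root cubicA ^ 2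
      + algebraMap TruncA TowerB alphaA ^ 2 * AdjoinRoot.root cubicA
      - algebraMap TruncA TowerB alphaA ^ 3 = 0 := by
  have h := AdjoinRoot.eval₂_root cubicA
  conv at h => lhs; arg 3; unfold cubicA
  simpa only [Polynomial.eval₂_sub, Polynomial.eval₂_add, Polynomial.eval₂_mul,
    Polynomial.eval₂_pow, Polynomial.eval₂_X, Polynomial.eval₂_C, map_pow,
    AdjoinRoot.algebraMap_eq] using h

lemma linearIndependent_tower :
    LinearIndependent ℚ (fun p : Fin 4 × Fin 3 =>
      algebraMap TruncA TowerB alphaA ^ p.1.val * AdjoinRoot.root cubicA ^ p.2.val) := by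
  have hm : (Polynomial.X ^ 4 : Polynomial ℚ).Monic := Polynomial.monic_X_pow 4
  let bA := (AdjoinRoot.powerBasis' hm).basis.reindex (finCongr (by simp) : _ ≃ Fin 4)
  let bB := (AdjoinRoot.powerBasis' cubicA_monic).basis.reindex
    (finCongr (by simp [cubicA_natDegree]) : _ ≃ Fin 3)
  have h : (fun p : Fin 4 × Fin 3 => algebraMap TruncA TowerB alphaA ^ p.1.val *
      AdjoinRoot.root cubicA ^ p.2.val) = bA.smulTower bB := by
    ext p
    simp [bA, bB, Module.Basis.smulTower_apply, Algebra.smul_def, alphaA]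
  rw [h]
  exact (bA.smulTower bB).linearIndependent

/-- The comparison map `R → B` with `a ↦ α` and `H ↦ β`. -/
def toTowerB : R →ₐ[ℚ] TowerB :=
  Ideal.Quotient.liftₐ J
    (aeval ![algebraMap TruncA TowerB alphaA, AdjoinRoot.root cubicA]) (by
      intro x hx
      have hJ : J ≤ RingHom.ker
          (aeval ![algebraMap TruncA TowerB alphaA, AdjoinRoot.root cubicA] : P →ₐ[ℚ] TowerB) := by
        unfold J
        rw [Ideal.span_le]
        rintro y (rfl | rfl)
        · simp only [SetLike.mem_coe, RingHom.mem_ker, aP, map_pow, aeval_X,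
            Matrix.cons_val_zero]
          rw [← map_pow, alphaA_pow_four, map_zero]
        · simpa [RingHom.mem_ker, aP, HP] using cubicA_root
      exact hJ hx)

lemma toTowerB_T (i j : ℕ) :
    toTowerB (T i j) = algebraMap TruncA TowerB alphaA ^ i * AdjoinRoot.root cubicA ^ j := by
  change aeval ![algebraMap TruncA TowerB alphaA, AdjoinRoot.root cubicA] (aP ^ i * HP ^ j) = _
  simp [aP, HP]

lemma linearIndependent_T :
    LinearIndependent ℚ (fun p : Fin 4 × Fin 3 => T p.1.val p.2.val) := by
  apply LinearIndependent.of_comp toTowerB.toLinearMap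
  have h : (toTowerB.toLinearMap ∘ fun p : Fin 4 × Fin 3 => T p.1.val p.2.val) =
      fun p : Fin 4 × Fin 3 => algebraMap TruncA TowerB alphaA ^ p.1.val *
        AdjoinRoot.root cubicA ^ p.2.val := by
    ext p
    exact toTowerB_T _ _
  rw [h]
  exact linearIndependent_tower

lemma T_eq_zero {i : ℕ} (hi : 4 ≤ i) (j : ℕ) : T i j = 0 := by
  refine Ideal.Quotient.eq_zero_iff_mem.mpr (Ideal.mul_mem_right _ _ ?_)
  have h : aP ^ 4 ∈ J := Ideal.subset_span (by simp)
  exact J.pow_mem_of_pow_mem h hi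

lemma T_three (i : ℕ) : T i 3 = T (i + 1) 2 - T (i + 2) 1 + T (i + 3) 0 := by
  unfold T
  rw [← map_sub, ← map_add, Ideal.Quotient.mk_eq_mk_iff_sub_mem]
  have h : HP ^ 3 - aP * HP ^ 2 + aP ^ 2 * HP - aP ^ 3 ∈ J := Ideal.subset_span (by simp)
  convert J.mul_mem_left (aP ^ i) h using 1
  ring

lemma T_mem_span (i : ℕ) {j : ℕ} (hj : j < 3) :
    T i j ∈ Submodule.span ℚ (Set.range fun p : Fin 4 × Fin 3 => T p.1.val p.2.val) := by
  by_cases hi : i < 4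
  · exact Submodule.subset_span ⟨(⟨i, hi⟩, ⟨j, hj⟩), rfl⟩
  · rw [T_eq_zero (not_lt.mp hi)]
    exact Submodule.zero_mem _

lemma T_mul_a (i j : ℕ) : T i j * Ideal.Quotient.mk J (X 0) = T (i + 1) j := by
  unfold T
  rw [← map_mul]
  congr 1
  unfold aP
  ring

lemma T_mul_H (i j : ℕ) : T i j * Ideal.Quotient.mk J (X 1) = T i (j + 1) := by
  unfold T
  rw [← map_mul]
  congr 1
  unfold HP
  ring

lemma mul_X_mem_span (n : Fin 2) {x : R}
    (hx : x ∈ Submodule.span ℚ (Set.range fun p : Fin 4 × Fin 3 => T p.1.val p.2.val)) :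
    x * Ideal.Quotient.mk J (X n) ∈
      Submodule.span ℚ (Set.range fun p : Fin 4 × Fin 3 => T p.1.val p.2.val) := by
  induction hx using Submodule.span_induction with
  | zero => rw [zero_mul]; exact Submodule.zero_mem _
  | add x y _ _ hx hy => rw [add_mul]; exact Submodule.add_mem _ hx hy
  | smul c x _ hx => rw [smul_mul_assoc]; exact Submodule.smul_mem _ c hx
  | mem x hx =>
    obtain ⟨⟨i, j⟩, rfl⟩ := hx
    match n with
    | 0 =>
      rw [T_mul_a]
      exact T_mem_span _ j.isLt
    | 1 =>
      rw [T_mul_H]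
      by_cases hj : j.val + 1 < 3
      · exact T_mem_span _ hj
      · have h3 : j.val + 1 = 3 := by lia
        simp only [h3]
        rw [T_three]
        exact Submodule.add_mem _
          (Submodule.sub_mem _ (T_mem_span _ (by lia)) (T_mem_span _ (by lia)))
          (T_mem_span _ (by lia))

lemma span_T :
    Submodule.span ℚ (Set.range fun p : Fin 4 × Fin 3 => T p.1.val p.2.val) = ⊤ := by
  rw [eq_top_iff]
  rintro x -
  obtain ⟨q, rfl⟩ := Ideal.Quotient.mk_surjective x
  induction q using MvPolynomial.induction_on with
  | C c =>
    have h : Ideal.Quotient.mk J (C c) = c • T 0 0 := by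
      unfold T
      rw [pow_zero, pow_zero, mul_one, map_one, ← Algebra.algebraMap_eq_smul_one]
      rfl
    rw [h]
    exact Submodule.smul_mem _ c (T_mem_span 0 (by lia))
  | add p q hp hq => rw [map_add]; exact Submodule.add_mem _ hp hq
  | mul_X p n hp => rw [map_mul]; exact mul_X_mem_span n hp

/-- **The 12 monomials `T i j = aⁱHʲ` (`0 ≤ i ≤ 3`, `0 ≤ j ≤ 2`) form a `ℚ`-basis
of `R = ℚ[a,H]/(a⁴, H³ − aH² + a²H − a³)`; in particular `R` has dimension 12
over `ℚ`.** -/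
theorem T_is_basis :
    LinearIndependent ℚ (fun p : Fin 4 × Fin 3 => T p.1.val p.2.val) ∧
    Submodule.span ℚ (Set.range fun p : Fin 4 × Fin 3 => T p.1.val p.2.val) = ⊤ ∧
    Module.finrank ℚ R = 12 := by
  refine ⟨linearIndependent_T, span_T, ?_⟩
  rw [Module.finrank_eq_card_basis (Module.Basis.mk linearIndependent_T span_T.ge)]
  simp

end
end

section
/- The Poincaré pairing ⟨x,y⟩ = ∫(xy) on R is a nondegenerate symmetric ℚ-bilinear form: if x ∈ R satisfies ⟨x,y⟩ = 0 for all y ∈ R, then x = 0. -/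
/-!
In `R` the relations read `a⁴ = 0` and `H³ = aH² − a²H + a³`. Multiplying the second by `H + a`
gives `H⁴ = a⁴ = 0`, so `∫ aⁱHʲ` is `1` when `(i, j)` is `(3, 2)` or `(2, 3)` and vanishes for all
other `i` and `j` (`integral_T`). Hence, if `x = ∑ c i j • T i j`, then
`⟨x, T k l⟩ = c (3 - k) (2 - l) + c (2 - k) (3 - l)`, where a coefficient with index out of range
is read as `0`. For `l = 0` only the first term is present, so all `c i 2` vanish; then `l = 1`
gives `c i 1 = 0`, and `l = 2` gives `c i 0 = 0`.
-/

open MvPolynomial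

noncomputable section

lemma T_mul (i j k l : ℕ) : T i j * T k l = T (i + k) (j + l) := by
  simp only [T, ← map_mul]
  congr 1
  ring

lemma T_four_left (i j : ℕ) : T (i + 4) j = 0 := by
  refine Ideal.Quotient.eq_zero_iff_mem.mpr ?_
  have h : aP ^ 4 ∈ J := Ideal.subset_span (by simp)
  convert J.mul_mem_left (aP ^ i * HP ^ j) h using 1
  ring

lemma T_three_right (i j : ℕ) :
    T i (j + 3) = T (i + 1) (j + 2) - T (i + 2) (j + 1) + T (i + 3) j := by
  simp only [T, ← map_sub, ← map_add]
  refine Ideal.Quotient.eq.mpr ?_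
  have h : HP ^ 3 - aP * HP ^ 2 + aP ^ 2 * HP - aP ^ 3 ∈ J := Ideal.subset_span (by simp)
  convert J.mul_mem_left (aP ^ i * HP ^ j) h using 1
  ring

/-- The relation `H⁴ = 0`: the cubic relation applied twice leaves only multiples of `a⁴`. -/
lemma T_four_right (i j : ℕ) : T i (j + 4) = 0 := by
  have h1 := T_three_right i (j + 1)
  have h2 := T_three_right (i + 1) j
  have h3 := T_four_left i j
  simp only [add_assoc, Nat.reduceAdd] at h1 h2 h3
  rw [h1, h2, h3]
  abel

/-- The integrals of all monomials. -/
lemma integral_T (Int : R →ₗ[ℚ] ℚ)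
    (hInt : ∀ i j, i ≤ 3 → j ≤ 2 → Int (T i j) = if i = 3 ∧ j = 2 then 1 else 0) (i j : ℕ) :
    Int (T i j) = if (i = 3 ∧ j = 2) ∨ (i = 2 ∧ j = 3) then 1 else 0 := by
  have small : ∀ i j, j ≤ 2 → Int (T i j) = if i = 3 ∧ j = 2 then 1 else 0 := by
    intro i j hj
    rcases le_or_gt i 3 with hi | hi
    · exact hInt i j hi hj
    · obtain ⟨k, rfl⟩ := Nat.exists_eq_add_of_le' hi
      rw [T_four_left, map_zero, if_neg (by omega)]
  rcases lt_trichotomy j 3 with hj | rfl | hj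
  · rw [small i j (by omega)]
    congr 1
    simp only [eq_iff_iff]
    omega
  · rw [T_three_right i 0, map_add, map_sub, small _ _ (by omega), small _ _ (by omega),
      small _ _ (by omega)]
    simp
  · obtain ⟨k, rfl⟩ := Nat.exists_eq_add_of_le' hj
    rw [T_four_right, map_zero, if_neg (by omega)]

/-- **Nondegeneracy of the Poincaré pairing.** Assuming the `T i j`
(`i ≤ 3`, `j ≤ 2`) form a `ℚ`-basis of `R` and `Int : R →ₗ[ℚ] ℚ` is the linear
functional with `Int (T 3 2) = 1` and `Int (T i j) = 0` otherwise, the symmetric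
bilinear pairing `⟨x, y⟩ = Int (x * y)` is nondegenerate: if `Int (x * y) = 0`
for all `y`, then `x = 0`. -/
theorem poincare_pairing_nondegenerate
    (hli : LinearIndependent ℚ (fun p : Fin 4 × Fin 3 => T p.1.val p.2.val))
    (hsp : Submodule.span ℚ (Set.range fun p : Fin 4 × Fin 3 => T p.1.val p.2.val) = ⊤)
    (Int : R →ₗ[ℚ] ℚ)
    (hInt : ∀ i j, i ≤ 3 → j ≤ 2 →
      Int (T i j) = if i = 3 ∧ j = 2 then 1 else 0) :
    (∀ x y : R, Int (x * y) = Int (y * x)) ∧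
    (∀ x : R, (∀ y : R, Int (x * y) = 0) → x = 0) := by
  refine ⟨fun x y => by rw [mul_comm], fun x hx => ?_⟩
  have hmem : x ∈ Submodule.span ℚ
      (Set.range fun p : Fin 4 × Fin 3 => T p.1.val p.2.val) := hsp ▸ Submodule.mem_top
  obtain ⟨c, rfl⟩ := (Submodule.mem_span_range_iff_exists_fun ℚ).mp hmem
  have pair : ∀ k l : ℕ, ∑ i : Fin 4, ∑ j : Fin 3, c (i, j) *
      (if (i.val + k = 3 ∧ j.val + l = 2) ∨ (i.val + k = 2 ∧ j.val + l = 3)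
        then (1 : ℚ) else 0) = 0 := by
    intro k l
    have h := hx (T k l)
    rw [Finset.sum_mul, map_sum, Fintype.sum_prod_type] at h
    simpa only [smul_mul_assoc, map_smul, T_mul, integral_T Int hInt, smul_eq_mul] using h
  have col2 : ∀ i, c (i, 2) = 0 := by
    intro i
    have h := pair (3 - i.val) 0
    fin_cases i <;> simpa [Fin.sum_univ_succ] using h
  have col1 : ∀ i, c (i, 1) = 0 := by
    intro i
    have h := pair (3 - i.val) 1
    fin_cases i <;> simpa [Fin.sum_univ_succ, col2] using h
  have col0 : ∀ i, c (i, 0) = 0 := by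
    intro i
    have h := pair (3 - i.val) 2
    fin_cases i <;> simpa [Fin.sum_univ_succ, col1] using h
  refine Finset.sum_eq_zero fun p _ => ?_
  obtain ⟨i, j⟩ := p
  fin_cases j <;> simp [col0, col1, col2]

end
end

section
/- If N : ℕ⁴ → ℚ satisfies conditions (i)–(iv), then N_3(11,0,0) = 12960; that is, the number of rational planar cubics in ℙ³ meeting 11 general lines, as computed by the recursion, equals 12960. -/
/-!
In the recursion for `N d r 0 θ` only `s₁ = s₂ = 0` occurs, so the values with `s = 0` are
determined among themselves. For these, conditions (i) and (ii) leave only `r = 3d + 2 - θ` with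
`θ ≤ 3`, that is, four values for each degree. They are computed in increasing degree and, within
a degree, in decreasing `θ`; for `θ = 3, 2, 1, 0` they are

* `d = 1` (lines): `1, 2, 2, 0`;
* `d = 2` (conics): `1, 8, 34, 92`;
* `d = 3` (cubics): `12, 216, 2040, 12960`.

The value at `(1, 2, 0, 3)` is an initial condition; each of the others is one application of the
recursion.
-/

open Finset

noncomputable section

/-- The binomial coefficient `C(a, b)` with the convention `C(a, b) = 0` when
`b < 0` or `b > a` (the latter is automatic for `Nat.choose`). -/
def C (a : ℕ) (b : ℤ) : ℚ := if 0 ≤ b then (a.choose b.toNat : ℚ) else 0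

/-- `SatN N` says that `N : ℕ⁴ → ℚ`, written `N d r s θ`, satisfies:
(i) `N d r s θ = 0` unless `d ≥ 1` and `r + 2s + θ = 3d + 2`;
(ii) `N d r s θ = 0` if `s > 3` or `θ > 3`;
(iii) for `r ≤ 2`, `N d r s θ = 1` if
`(d,r,s,θ) ∈ {(1,0,2,1), (1,2,1,1), (1,1,1,2), (1,2,0,3), (2,2,3,0)}`
and `0` otherwise;
(iv) for `d ≥ 1` and `r ≥ 3`, the recursion
`N d r s θ = 2d·N d (r−1) s (θ+1) − 2d²·N d (r−2) s (θ+2)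
  + ∑_{d₁+d₂=d, d₁,d₂>0} ∑_{r₁+r₂=r−1} ∑_{s₁+s₂=s} ∑_{θ₁+θ₂=θ+3}
    (d₁²d₂²·C(r−3, r₁−1) − d₁³d₂·C(r−3, r₁))·C(s, s₁)·N d₁ r₁ s₁ θ₁·N d₂ r₂ s₂ θ₂`. -/
def SatN (N : ℕ → ℕ → ℕ → ℕ → ℚ) : Prop :=
  (∀ d r s θ, ¬(1 ≤ d ∧ r + 2 * s + θ = 3 * d + 2) → N d r s θ = 0) ∧
  (∀ d r s θ, (3 < s ∨ 3 < θ) → N d r s θ = 0) ∧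
  (∀ d r s θ, r ≤ 2 →
    N d r s θ =
      if (d, r, s, θ) = (1, 0, 2, 1) ∨ (d, r, s, θ) = (1, 2, 1, 1) ∨
          (d, r, s, θ) = (1, 1, 1, 2) ∨ (d, r, s, θ) = (1, 2, 0, 3) ∨
          (d, r, s, θ) = (2, 2, 3, 0) then 1 else 0) ∧
  (∀ d r s θ, 1 ≤ d → 3 ≤ r →
    N d r s θ =
      2 * (d : ℚ) * N d (r - 1) s (θ + 1) - 2 * (d : ℚ) ^ 2 * N d (r - 2) s (θ + 2)
        + ∑ d₁ ∈ Finset.Ioo 0 d, ∑ r₁ ∈ Finset.range r,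
            ∑ s₁ ∈ Finset.range (s + 1), ∑ θ₁ ∈ Finset.range (θ + 4),
            ((d₁ : ℚ) ^ 2 * ((d - d₁ : ℕ) : ℚ) ^ 2 * C (r - 3) ((r₁ : ℤ) - 1)
                - (d₁ : ℚ) ^ 3 * ((d - d₁ : ℕ) : ℚ) * C (r - 3) (r₁ : ℤ))
              * C s (s₁ : ℤ)
              * N d₁ r₁ s₁ θ₁ * N (d - d₁) (r - 1 - r₁) (s - s₁) (θ + 3 - θ₁))

set_option maxHeartbeats 2000000 in
/-- **The number of rational planar cubics in `ℙ³` through 11 general lines is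
`12960`:** any `N` satisfying conditions (i)–(iv) has `N 3 11 0 0 = 12960`. -/
theorem planar_cubics_through_eleven_lines
    (N : ℕ → ℕ → ℕ → ℕ → ℚ) (hN : SatN N) : N 3 11 0 0 = 12960 := by
  obtain ⟨hdim, hlarge, hinit, hrec⟩ := hN
  have hzero : ∀ d r θ, (r + θ ≠ 3 * d + 2 ∨ 3 < θ) → N d r 0 θ = 0 := by
    rintro d r θ (h | h)
    · exact hdim d r 0 θ (by omega)
    · exact hlarge d r 0 θ (Or.inr h)
  have hIoo1 : Finset.Ioo 0 1 = ∅ := by decide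
  have hIoo2 : Finset.Ioo 0 2 = {1} := by decide
  have hIoo3 : Finset.Ioo 0 3 = {1, 2} := by decide
  have a₃ : N 1 2 0 3 = 1 := by simp [hinit]
  have a₂ : N 1 3 0 2 = 2 := by
    rw [hrec 1 3 0 2 (by norm_num) (by norm_num)]
    norm_num [hIoo1, hIoo2, hIoo3, C, Finset.sum_range_succ, Nat.choose, hzero,
      a₃]
  have a₁ : N 1 4 0 1 = 2 := by
    rw [hrec 1 4 0 1 (by norm_num) (by norm_num)]
    norm_num [hIoo1, hIoo2, hIoo3, C, Finset.sum_range_succ, Nat.choose, hzero,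
      a₃, a₂]
  have a₀ : N 1 5 0 0 = 0 := by
    rw [hrec 1 5 0 0 (by norm_num) (by norm_num)]
    norm_num [hIoo1, hIoo2, hIoo3, C, Finset.sum_range_succ, Nat.choose, hzero,
      a₃, a₂, a₁]
  have b₃ : N 2 5 0 3 = 1 := by
    rw [hrec 2 5 0 3 (by norm_num) (by norm_num)]
    norm_num [hIoo1, hIoo2, hIoo3, C, Finset.sum_range_succ, Nat.choose, hzero,
      a₃, a₂, a₁, a₀]
  have b₂ : N 2 6 0 2 = 8 := by
    rw [hrec 2 6 0 2 (by norm_num) (by norm_num)]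
    norm_num [hIoo1, hIoo2, hIoo3, C, Finset.sum_range_succ, Nat.choose, hzero,
      a₃, a₂, a₁, a₀, b₃]
  have b₁ : N 2 7 0 1 = 34 := by
    rw [hrec 2 7 0 1 (by norm_num) (by norm_num)]
    norm_num [hIoo1, hIoo2, hIoo3, C, Finset.sum_range_succ, Nat.choose, hzero,
      a₃, a₂, a₁, a₀, b₃, b₂]
  have b₀ : N 2 8 0 0 = 92 := by
    rw [hrec 2 8 0 0 (by norm_num) (by norm_num)]
    norm_num [hIoo1, hIoo2, hIoo3, C, Finset.sum_range_succ, Nat.choose, hzero,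
      a₃, a₂, a₁, a₀, b₃, b₂, b₁]
  have c₃ : N 3 8 0 3 = 12 := by
    rw [hrec 3 8 0 3 (by norm_num) (by norm_num)]
    norm_num [hIoo1, hIoo2, hIoo3, C, Finset.sum_range_succ, Nat.choose, hzero,
      a₃, a₂, a₁, a₀, b₃, b₂, b₁, b₀]
  have c₂ : N 3 9 0 2 = 216 := by
    rw [hrec 3 9 0 2 (by norm_num) (by norm_num)]
    norm_num [hIoo1, hIoo2, hIoo3, C, Finset.sum_range_succ, Nat.choose, hzero,
      a₃, a₂, a₁, a₀, b₃, b₂, b₁, b₀, c₃]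
  have c₁ : N 3 10 0 1 = 2040 := by
    rw [hrec 3 10 0 1 (by norm_num) (by norm_num)]
    norm_num [hIoo1, hIoo2, hIoo3, C, Finset.sum_range_succ, Nat.choose, hzero,
      a₃, a₂, a₁, a₀, b₃, b₂, b₁, b₀, c₃, c₂]
  rw [hrec 3 11 0 0 (by norm_num) (by norm_num)]
  norm_num [hIoo1, hIoo2, hIoo3, C, Finset.sum_range_succ, Nat.choose, hzero,
      a₃, a₂, a₁, a₀, b₃, b₂, b₁, b₀, c₃, c₂, c₁]

end
end
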